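/- One-step guarantee of greedy maximization: let f be a monotone submodular set function on finite subsets of V, let O be a finite set with |O| ≤ k and k ≥ 1, and let S be any finite set. If v maximizes the marginal gain f_u(S) = f(S∪{u}) − f(S) over all u ∈ V, then f(S∪{v}) − f(S) ≥ (f(O) − f(S))/k; equivalently, f(O) − f(S∪{v}) ≤ (1 − 1/k)·(f(O) − f(S)). -/

import Mathlib

/-!
Add the elements of `O \ S` to `S` one at a time. By submodularity each increment is at most the
marginal gain of the same element at `S`, hence at most the best such gain. Monotonicity gives
`f O ≤ f (S ∪ O)`, so at most `k` increments cover the whole gap `f O - f S`.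
-/

section MarginalGain

variable {V R : Type*} [DecidableEq V]

/-- The marginal gain `f_u(S) = f (S ∪ {u}) - f S` of an element `u` with respect to a set `S`. -/
def marginalGain [Sub R] (f : Finset V → R) (S : Finset V) (u : V) : R :=
  f (insert u S) - f S

/-- Submodularity of a set function on finite sets, in its diminishing-returns form: enlarging a
set does not increase the marginal gain of an element outside it. -/
def IsSubmodular [Sub R] [LE R] (f : Finset V → R) : Prop :=
  ∀ ⦃S T : Finset V⦄ ⦃u : V⦄, S ⊆ T → u ∉ T → marginalGain f T u ≤ marginalGain f S u

theorem marginalGain_of_mem [AddGroup R] (f : Finset V → R) {S : Finset V} {u : V} (hu : u ∈ S) :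
    marginalGain f S u = 0 := by
  rw [marginalGain, Finset.insert_eq_of_mem hu, sub_self]

theorem IsSubmodular.marginalGain_union_le [AddGroup R] [Preorder R] {f : Finset V → R}
    (hf : IsSubmodular f) {S A : Finset V} {u : V} (hu : u ∉ A) :
    marginalGain f (S ∪ A) u ≤ marginalGain f S u := by
  by_cases huS : u ∈ S
  · rw [marginalGain_of_mem f huS, marginalGain_of_mem f (Finset.mem_union_left A huS)]
  · exact hf Finset.subset_union_left (by simp [huS, hu])

variable [AddCommGroup R] [PartialOrder R] [IsOrderedAddMonoid R] {f : Finset V → R}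

theorem marginalGain_nonneg (hf : Monotone f) (S : Finset V) (u : V) : 0 ≤ marginalGain f S u :=
  sub_nonneg.2 (hf (Finset.subset_insert u S))

theorem IsSubmodular.sub_le_sum_marginalGain (hf : IsSubmodular f) (S A : Finset V) :
    f (S ∪ A) - f S ≤ ∑ u ∈ A, marginalGain f S u := by
  induction A using Finset.induction_on with
  | empty => simp
  | insert a A ha ih =>
    calc f (S ∪ insert a A) - f S
        = marginalGain f (S ∪ A) a + (f (S ∪ A) - f S) := by
          rw [marginalGain, Finset.union_insert, sub_add_sub_cancel]
      _ ≤ marginalGain f S a + ∑ u ∈ A, marginalGain f S u :=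
          add_le_add (hf.marginalGain_union_le ha) ih
      _ = ∑ u ∈ insert a A, marginalGain f S u := (Finset.sum_insert ha).symm

theorem IsSubmodular.sub_le_card_sdiff_nsmul (hf : IsSubmodular f) (hmono : Monotone f)
    {S O : Finset V} {c : R} (hc : ∀ u ∈ O \ S, marginalGain f S u ≤ c) :
    f O - f S ≤ (O \ S).card • c :=
  calc f O - f S
      ≤ f (S ∪ O \ S) - f S := by
        rw [Finset.union_sdiff_self_eq_union]
        exact sub_le_sub_right (hmono Finset.subset_union_right) _
    _ ≤ ∑ u ∈ O \ S, marginalGain f S u := hf.sub_le_sum_marginalGain S (O \ S)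
    _ ≤ (O \ S).card • c := Finset.sum_le_card_nsmul _ _ _ hc

end MarginalGain

theorem greedy_one_step_general {V R : Type*} [DecidableEq V]
    [Field R] [LinearOrder R] [IsStrictOrderedRing R] {f : Finset V → R}
    (hmono : Monotone f) (hsub : IsSubmodular f) {k : ℕ} (hk : 1 ≤ k)
    {O S : Finset V} (hO : (O \ S).card ≤ k) {v : V}
    (hv : ∀ u ∈ O \ S, marginalGain f S u ≤ marginalGain f S v) :
    (f O - f S) / (k : R) ≤ f (insert v S) - f S ∧
    f O - f (insert v S) ≤ (1 - 1 / (k : R)) * (f O - f S) := by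
  have hgap : f O - f S ≤ marginalGain f S v * k :=
    calc f O - f S
        ≤ (O \ S).card • marginalGain f S v := hsub.sub_le_card_sdiff_nsmul hmono hv
      _ ≤ k • marginalGain f S v := nsmul_le_nsmul_left (marginalGain_nonneg hmono S v) hO
      _ = marginalGain f S v * k := nsmul_eq_mul' _ _
  have hgain : (f O - f S) / (k : R) ≤ f (insert v S) - f S :=
    (div_le_iff₀ (Nat.cast_pos.2 hk)).2 hgap
  refine ⟨hgain, ?_⟩
  calc f O - f (insert v S)
      = (f O - f S) - (f (insert v S) - f S) := (sub_sub_sub_cancel_right _ _ _).symm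
    _ ≤ (f O - f S) - (f O - f S) / k := sub_le_sub_left hgain _
    _ = (1 - 1 / (k : R)) * (f O - f S) := by ring

/-- One-step guarantee of greedy maximization: if `v` maximizes the marginal
gain over all elements, `|O| ≤ k` and `k ≥ 1`, then
`f(S∪{v}) − f(S) ≥ (f(O) − f(S))/k`, equivalently
`f(O) − f(S∪{v}) ≤ (1 − 1/k)·(f(O) − f(S))`. -/
theorem greedy_one_step {V : Type*} [Fintype V] [DecidableEq V]
    (f : Finset V → ℝ)
    (hmono : ∀ S T : Finset V, S ⊆ T → f S ≤ f T)
    (hsub : ∀ S T : Finset V, ∀ u : V, S ⊆ T → u ∉ T →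
      f (insert u T) - f T ≤ f (insert u S) - f S)
    (k : ℕ) (hk : 1 ≤ k) (O : Finset V) (hO : O.card ≤ k)
    (S : Finset V) (v : V)
    (hv : ∀ u : V, f (insert u S) - f S ≤ f (insert v S) - f S) :
    (f O - f S) / (k : ℝ) ≤ f (insert v S) - f S ∧
    f O - f (insert v S) ≤ (1 - 1 / (k : ℝ)) * (f O - f S) :=
  greedy_one_step_general (fun S T => hmono S T) (fun S T u => hsub S T u) hk
    ((Finset.card_le_card Finset.sdiff_subset).trans hO) (fun u _ => hv u)
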